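/- Let g(z) = exp(az²/2) and f(z) = exp(bz²/2) with a, b > 0 and ab < 1. Then the formal differential operator g(d/dz) applied to f satisfies g(d/dz) f = (1−ab)^{−1/2} exp( (b/(2(1−ab))) z² ), where g(d/dz) f is defined by applying the power series of g in d/dz termwise to f and summing (the series converging locally uniformly). -/

import Mathlib

open Complex

noncomputable section

/-!
The Gaussian heat flow `u (t, z) = (1 - tb)^(-1/2) exp (b z² / (2 (1 - tb)))` starts from
`u (0, z) = exp (b z² / 2)` and satisfies `∂ₜ u = (1/2) ∂_z² u`. Partial derivatives of an analytic
function commute, so `∂ₜᵏ u = (1/2)ᵏ ∂_z²ᵏ u`; the series for `g(d/dz) f` at `z` is therefore the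
Taylor series of `u (·, z)` at `0`, evaluated at `a`. It converges because `u (·, z)` is holomorphic
on the disc `‖t b‖ < 1`, which contains `a`.
-/

open Filter Topology

section PartialDerivatives

variable {𝕜 E : Type*} [NontriviallyNormedField 𝕜] [NormedAddCommGroup E] [NormedSpace 𝕜 E]
  {u : 𝕜 × 𝕜 → E} {p : 𝕜 × 𝕜}

theorem deriv_fst_eq_fderiv (hu : DifferentiableAt 𝕜 u p) :
    deriv (fun t ↦ u (t, p.2)) p.1 = fderiv 𝕜 u p (1, 0) :=
  (hu.hasFDerivAt.comp_hasDerivAt p.1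
    ((hasDerivAt_id p.1).prodMk (hasDerivAt_const p.1 p.2))).deriv

theorem deriv_snd_eq_fderiv (hu : DifferentiableAt 𝕜 u p) :
    deriv (fun z ↦ u (p.1, z)) p.2 = fderiv 𝕜 u p (0, 1) :=
  (hu.hasFDerivAt.comp_hasDerivAt p.2
    ((hasDerivAt_const p.2 p.1).prodMk (hasDerivAt_id p.2))).deriv

variable [CompleteSpace E]

theorem deriv_fst_eventuallyEq_fderiv (hu : AnalyticAt 𝕜 u p) :
    (fun q ↦ deriv (fun t ↦ u (t, q.2)) q.1) =ᶠ[𝓝 p] fun q ↦ fderiv 𝕜 u q (1, 0) :=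
  hu.eventually_analyticAt.mono fun _ hq ↦ deriv_fst_eq_fderiv hq.differentiableAt

theorem deriv_snd_eventuallyEq_fderiv (hu : AnalyticAt 𝕜 u p) :
    (fun q ↦ deriv (fun z ↦ u (q.1, z)) q.2) =ᶠ[𝓝 p] fun q ↦ fderiv 𝕜 u q (0, 1) :=
  hu.eventually_analyticAt.mono fun _ hq ↦ deriv_snd_eq_fderiv hq.differentiableAt

theorem analyticAt_iteratedDeriv_snd (hu : AnalyticAt 𝕜 u p) (m : ℕ) :
    AnalyticAt 𝕜 (fun q : 𝕜 × 𝕜 ↦ iteratedDeriv m (fun z ↦ u (q.1, z)) q.2) p := by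
  induction m with
  | zero => simpa only [iteratedDeriv_zero] using hu
  | succ m ih =>
    simp only [iteratedDeriv_succ]
    have heval := (ContinuousLinearMap.apply 𝕜 E ((0, 1) : 𝕜 × 𝕜)).analyticAt
      (fderiv 𝕜 (fun q : 𝕜 × 𝕜 ↦ iteratedDeriv m (fun z ↦ u (q.1, z)) q.2) p)
    exact (heval.comp ih.fderiv).congr (deriv_snd_eventuallyEq_fderiv ih).symm

theorem deriv_fst_deriv_snd_comm (hu : AnalyticAt 𝕜 u p) :
    deriv (fun t ↦ deriv (fun z ↦ u (t, z)) p.2) p.1 =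
      deriv (fun z ↦ deriv (fun t ↦ u (t, z)) p.1) p.2 := by
  have hsymm : IsSymmSndFDerivAt 𝕜 u p := hu.contDiffAt.isSymmSndFDerivAt_of_omega
  have hdiff : DifferentiableAt 𝕜 (fderiv 𝕜 u) p := hu.fderiv.differentiableAt
  have hfst : Tendsto (fun t ↦ (t, p.2)) (𝓝 p.1) (𝓝 p) :=
    (Continuous.prodMk_left p.2).tendsto p.1
  have hsnd : Tendsto (fun z ↦ (p.1, z)) (𝓝 p.2) (𝓝 p) :=
    (Continuous.prodMk_right p.1).tendsto p.2
  calc deriv (fun t ↦ deriv (fun z ↦ u (t, z)) p.2) p.1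
      = deriv (fun t ↦ fderiv 𝕜 u (t, p.2) (0, 1)) p.1 :=
        EventuallyEq.deriv_eq (hfst.eventually (deriv_snd_eventuallyEq_fderiv hu))
    _ = fderiv 𝕜 (fderiv 𝕜 u) p (1, 0) (0, 1) := by
        rw [deriv_fst_eq_fderiv (u := fun q ↦ fderiv 𝕜 u q (0, 1))
          (hdiff.clm_apply (differentiableAt_const _)), fderiv_clm_apply hdiff (by fun_prop)]
        simp
    _ = fderiv 𝕜 (fderiv 𝕜 u) p (0, 1) (1, 0) := hsymm.eq _ _
    _ = deriv (fun z ↦ fderiv 𝕜 u (p.1, z) (1, 0)) p.2 := by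
        rw [deriv_snd_eq_fderiv (u := fun q ↦ fderiv 𝕜 u q (1, 0))
          (hdiff.clm_apply (differentiableAt_const _)), fderiv_clm_apply hdiff (by fun_prop)]
        simp
    _ = deriv (fun z ↦ deriv (fun t ↦ u (t, z)) p.1) p.2 :=
        EventuallyEq.deriv_eq (hsnd.eventually (deriv_fst_eventuallyEq_fderiv hu).symm)

theorem deriv_fst_iteratedDeriv_snd_comm (hu : AnalyticAt 𝕜 u p) (m : ℕ) :
    deriv (fun t ↦ iteratedDeriv m (fun z ↦ u (t, z)) p.2) p.1 =
      iteratedDeriv m (fun z ↦ deriv (fun t ↦ u (t, z)) p.1) p.2 := by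
  induction m generalizing p with
  | zero => simp only [iteratedDeriv_zero]
  | succ m ih =>
    have hsnd : Tendsto (fun z ↦ (p.1, z)) (𝓝 p.2) (𝓝 p) :=
      (Continuous.prodMk_right p.1).tendsto p.2
    simp only [iteratedDeriv_succ]
    rw [deriv_fst_deriv_snd_comm (analyticAt_iteratedDeriv_snd hu m)]
    exact EventuallyEq.deriv_eq <|
      (hsnd.eventually hu.eventually_analyticAt).mono fun z hz ↦ ih hz

end PartialDerivatives

section EvolutionEquation

theorem iteratedDeriv_fst_eq_of_evolution {𝕜 E : Type*} [NontriviallyNormedField 𝕜]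
    [NormedAddCommGroup E] [NormedSpace 𝕜 E] [CompleteSpace E] {u : 𝕜 × 𝕜 → E} {Ω : Set (𝕜 × 𝕜)}
    {κ : 𝕜} {m : ℕ} (hΩ : IsOpen Ω) (hu : AnalyticOnNhd 𝕜 u Ω)
    (hevol : ∀ p ∈ Ω, deriv (fun t ↦ u (t, p.2)) p.1 =
      κ • iteratedDeriv m (fun z ↦ u (p.1, z)) p.2)
    (k : ℕ) {p : 𝕜 × 𝕜} (hp : p ∈ Ω) :
    iteratedDeriv k (fun t ↦ u (t, p.2)) p.1 =
      κ ^ k • iteratedDeriv (m * k) (fun z ↦ u (p.1, z)) p.2 := by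
  induction k generalizing p with
  | zero => simp
  | succ k ih =>
    have hfst : ∀ᶠ t in 𝓝 p.1, (t, p.2) ∈ Ω :=
      ((Continuous.prodMk_left p.2).tendsto p.1).eventually (hΩ.mem_nhds hp)
    have hsnd : ∀ᶠ z in 𝓝 p.2, (p.1, z) ∈ Ω :=
      ((Continuous.prodMk_right p.1).tendsto p.2).eventually (hΩ.mem_nhds hp)
    calc iteratedDeriv (k + 1) (fun t ↦ u (t, p.2)) p.1
        = deriv (fun t ↦ κ ^ k • iteratedDeriv (m * k) (fun z ↦ u (t, z)) p.2) p.1 := by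
          rw [iteratedDeriv_succ]
          exact EventuallyEq.deriv_eq (hfst.mono fun t ht ↦ ih ht)
      _ = κ ^ k • iteratedDeriv (m * k) (fun z ↦ deriv (fun t ↦ u (t, z)) p.1) p.2 := by
          rw [deriv_fun_const_smul_field, deriv_fst_iteratedDeriv_snd_comm (hu p hp)]
      _ = κ ^ k • iteratedDeriv (m * k)
            (fun z ↦ κ • iteratedDeriv m (fun w ↦ u (p.1, w)) z) p.2 := by
          rw [EventuallyEq.iteratedDeriv_eq _ (hsnd.mono fun z hz ↦ hevol (p.1, z) hz)]
      _ = κ ^ (k + 1) • iteratedDeriv (m * (k + 1)) (fun z ↦ u (p.1, z)) p.2 := by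
          rw [iteratedDeriv_fun_const_smul_field, smul_smul, ← pow_succ, mul_add_one]
          simp only [iteratedDeriv_eq_iterate, Function.iterate_add_apply]

theorem hasSum_iteratedDeriv_snd_of_evolution {E : Type*} [NormedAddCommGroup E] [NormedSpace ℂ E]
    [CompleteSpace E] {u : ℂ × ℂ → E} {Ω : Set (ℂ × ℂ)} {κ : ℂ} {m : ℕ}
    (hΩ : IsOpen Ω) (hu : AnalyticOnNhd ℂ u Ω)
    (hevol : ∀ p ∈ Ω, deriv (fun t ↦ u (t, p.2)) p.1 =
      κ • iteratedDeriv m (fun z ↦ u (p.1, z)) p.2)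
    {t₀ t z : ℂ} {R : ℝ} (hball : ∀ s ∈ Metric.ball t₀ R, (s, z) ∈ Ω)
    (ht : t ∈ Metric.ball t₀ R) :
    HasSum (fun k : ℕ ↦ (((t - t₀) * κ) ^ k / (k.factorial : ℂ)) •
      iteratedDeriv (m * k) (fun w ↦ u (t₀, w)) z) (u (t, z)) := by
  have hcenter : (t₀, z) ∈ Ω :=
    hball t₀ (Metric.mem_ball_self (dist_nonneg.trans_lt (Metric.mem_ball.mp ht)))
  have hdiff : DifferentiableOn ℂ (fun s ↦ u (s, z)) (Metric.ball t₀ R) := fun s hs ↦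
    (hu (s, z) (hball s hs)).curry_left.differentiableAt.differentiableWithinAt
  refine (Complex.hasSum_taylorSeries_on_ball hdiff ht).congr_fun fun k ↦ ?_
  rw [iteratedDeriv_fst_eq_of_evolution hΩ hu hevol k hcenter, smul_smul, smul_smul]
  congr 1
  rw [mul_pow, div_eq_inv_mul, mul_assoc]

end EvolutionEquation

/-- The solution `u (t, z)` of the heat equation `∂ₜ u = (1/2) ∂_z² u` with initial value
`u (0, z) = exp (b z² / 2)`, as a function of complex time and space. The square root is the
principal one, holomorphic where `1 - t b` lies in the slit plane. -/
def gaussianHeatFlow (b : ℂ) (p : ℂ × ℂ) : ℂ :=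
  (1 - p.1 * b) ^ (-1 / 2 : ℂ) * exp (b / (2 * (1 - p.1 * b)) * p.2 ^ 2)

section GaussianHeatFlow

theorem gaussianHeatFlow_zero_left (b z : ℂ) :
    gaussianHeatFlow b (0, z) = exp (b * z ^ 2 / 2) := by
  simp only [gaussianHeatFlow, zero_mul, sub_zero, one_cpow, one_mul, mul_one]
  ring_nf

variable {b : ℂ} {p : ℂ × ℂ}

theorem analyticAt_gaussianHeatFlow (hp : 1 - p.1 * b ∈ slitPlane) :
    AnalyticAt ℂ (gaussianHeatFlow b) p := by
  have hne : 2 * (1 - p.1 * b) ≠ 0 := mul_ne_zero two_ne_zero (slitPlane_ne_zero hp)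
  have hbase : AnalyticAt ℂ (fun q : ℂ × ℂ ↦ 1 - q.1 * b) p :=
    analyticAt_const.sub (analyticAt_fst.mul analyticAt_const)
  exact (hbase.cpow analyticAt_const hp).mul
    ((analyticAt_const.div (analyticAt_const.mul hbase) hne).mul (analyticAt_snd.pow 2)).cexp

theorem iteratedDeriv_two_const_mul_cexp_sq (A c z : ℂ) :
    iteratedDeriv 2 (fun w ↦ A * exp (c * w ^ 2)) z =
      (2 * c + (2 * c * z) ^ 2) * (A * exp (c * z ^ 2)) := by
  have hexp (w : ℂ) : HasDerivAt (fun w ↦ A * exp (c * w ^ 2))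
      (2 * c * w * (A * exp (c * w ^ 2))) w := by
    refine (((hasDerivAt_pow 2 w).const_mul c).cexp.const_mul A).congr_deriv ?_
    push_cast
    ring
  have hexp' := ((hasDerivAt_id' z).const_mul (2 * c)).mul (hexp z)
  rw [iteratedDeriv_succ, iteratedDeriv_one, funext fun w ↦ (hexp w).deriv]
  refine hexp'.deriv.trans ?_
  ring

theorem hasDerivAt_cpow_neg_half_one_sub_mul {t : ℂ} (ht : 1 - t * b ∈ slitPlane) :
    HasDerivAt (fun s ↦ (1 - s * b) ^ (-1 / 2 : ℂ))
      (b / (2 * (1 - t * b)) * (1 - t * b) ^ (-1 / 2 : ℂ)) t := by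
  have hne := slitPlane_ne_zero ht
  refine ((((hasDerivAt_id' t).mul_const b).const_sub 1).cpow_const
    (c := -1 / 2) ht).congr_deriv ?_
  rw [cpow_sub _ _ hne, cpow_one]
  field_simp

theorem hasDerivAt_div_two_mul_one_sub_mul {t : ℂ} (ht : 1 - t * b ≠ 0) :
    HasDerivAt (fun s ↦ b / (2 * (1 - s * b))) (2 * (b / (2 * (1 - t * b))) ^ 2) t := by
  have hden := (((hasDerivAt_id' t).mul_const b).const_sub 1).const_mul 2
  refine ((hasDerivAt_const t b).div hden (mul_ne_zero two_ne_zero ht)).congr_deriv ?_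
  field_simp
  ring

theorem gaussianHeatFlow_heat_equation (hp : 1 - p.1 * b ∈ slitPlane) :
    deriv (fun t ↦ gaussianHeatFlow b (t, p.2)) p.1 =
      (1 / 2 : ℂ) • iteratedDeriv 2 (fun z ↦ gaussianHeatFlow b (p.1, z)) p.2 := by
  have hexp := ((hasDerivAt_div_two_mul_one_sub_mul (slitPlane_ne_zero hp)).mul_const
    (p.2 ^ 2)).cexp
  refine ((hasDerivAt_cpow_neg_half_one_sub_mul hp).mul hexp).deriv.trans ?_
  simp only [gaussianHeatFlow, iteratedDeriv_two_const_mul_cexp_sq, smul_eq_mul]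
  ring

theorem one_sub_mem_slitPlane_of_norm_lt_one {z : ℂ} (hz : ‖z‖ < 1) : 1 - z ∈ slitPlane := by
  simpa only [sub_eq_add_neg] using mem_slitPlane_of_norm_lt_one ((norm_neg z).trans_lt hz)

end GaussianHeatFlow

theorem ofReal_cpow_neg_half {x : ℝ} (hx : 0 ≤ x) :
    (x : ℂ) ^ (-1 / 2 : ℂ) = ((√x : ℝ) : ℂ)⁻¹ := by
  rw [Real.sqrt_eq_rpow, ofReal_cpow hx, neg_div, cpow_neg]
  norm_num

theorem stmt_11_general (a b z : ℂ) (hab : ‖a * b‖ < 1) :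
    HasSum (fun k : ℕ ↦ ((a / 2) ^ k / (k.factorial : ℂ)) *
        iteratedDeriv (2 * k) (fun w ↦ exp (b * w ^ 2 / 2)) z)
      ((1 - a * b) ^ (-1 / 2 : ℂ) * exp (b / (2 * (1 - a * b)) * z ^ 2)) := by
  obtain ⟨R, hRb, haR⟩ : ∃ R : ℝ, R * ‖b‖ < 1 ∧ ‖a‖ < R := by
    have hcont : Tendsto (fun R : ℝ ↦ R * ‖b‖) (𝓝[>] ‖a‖) (𝓝 (‖a‖ * ‖b‖)) :=
      (Continuous.tendsto (by fun_prop) _).mono_left nhdsWithin_le_nhds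
    exact ((hcont.eventually_lt_const (norm_mul a b ▸ hab)).and self_mem_nhdsWithin).exists
  have hball : ∀ t ∈ Metric.ball (0 : ℂ) R, 1 - t * b ∈ slitPlane := fun t ht ↦ by
    refine one_sub_mem_slitPlane_of_norm_lt_one ?_
    calc ‖t * b‖ = ‖t‖ * ‖b‖ := norm_mul t b
      _ ≤ R * ‖b‖ := by gcongr; exact (mem_ball_zero_iff.mp ht).le
      _ < 1 := hRb
  have hsum := hasSum_iteratedDeriv_snd_of_evolution
    (u := gaussianHeatFlow b) (Ω := {p | 1 - p.1 * b ∈ slitPlane}) (z := z)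
    (isOpen_slitPlane.preimage (by fun_prop)) (fun _ ↦ analyticAt_gaussianHeatFlow)
    (fun _ ↦ gaussianHeatFlow_heat_equation) hball (mem_ball_zero_iff.mpr haR)
  simp only [gaussianHeatFlow_zero_left, sub_zero, mul_one_div, smul_eq_mul] at hsum
  exact hsum

/-- For `g(z) = exp(az²/2)`, `f(z) = exp(bz²/2)` with `a, b > 0`, `ab < 1`:
`g(d/dz) f = ∑_k (a/2)^k/k! · f^{(2k)} = (1-ab)^{-1/2} exp((b/(2(1-ab))) z²)`. -/
theorem stmt_11 (a b : ℝ) (ha : 0 < a) (hb : 0 < b) (hab : a * b < 1) (z : ℂ) :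
    HasSum
      (fun k : ℕ => (((a / 2 : ℂ) ^ k / (Nat.factorial k : ℂ))) *
        iteratedDeriv (2 * k) (fun w : ℂ => Complex.exp ((b : ℂ) * w ^ 2 / 2)) z)
      (((Real.sqrt (1 - a * b) : ℝ) : ℂ)⁻¹ *
        Complex.exp (((b : ℂ) / (2 * (1 - (a : ℂ) * (b : ℂ)))) * z ^ 2)) := by
  have hnorm : ‖(a * b : ℂ)‖ < 1 := by
    rwa [← ofReal_mul, Complex.norm_of_nonneg (mul_pos ha hb).le]
  simpa only [← ofReal_cpow_neg_half (sub_nonneg.mpr hab.le), ofReal_sub, ofReal_one, ofReal_mul]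
    using stmt_11_general a b z hnorm
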